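/- Let Ω ⊂ ℝ² be bounded and smooth, 0 ≤ ρ ≤ R̄ a.e., and u ∈ H₀¹(Ω;ℝ²). Then there exists C = C(R̄, Ω) such that ‖√ρ u‖²_{L⁴} ≤ C (1 + ‖√ρ u‖_{L²}) ‖∇u‖_{L²} √(log(2 + ‖∇u‖²_{L²})). -/

import Mathlib

open Set MeasureTheory

/-- Partial derivative of a scalar field in the `i`-th coordinate direction. -/
noncomputable def pd (v : (Fin 2 → ℝ) → ℝ) (i : Fin 2) (x : Fin 2 → ℝ) : ℝ :=
  fderiv ℝ v x (Pi.single i 1)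

/-!
Let `A = ∫ ρ|u|²`, `G = ∫ |∇u|²`, and let `D` bound the width of the support of `u` in the first
coordinate direction. Following the ray of slope `t` from `x` until it leaves the support and
averaging over `t ∈ [0, 1]` gives `|u x| ≤ ∫∫ |∇u|(x + (s, st)) · √2 ds dt`. Because `s ds dt` is
Lebesgue measure on the cone spanned by these rays, Hölder's inequality with a power of `s` as
weight yields `‖u‖_{L^{2p}} ≤ D^{1/p} √(2p) ‖∇u‖_{L²}` for all `p ≥ 1`: the constant grows only
like `√p`.

Interpolating `ρ|u|²` between `L¹` and `L^{1+s}` then bounds `∫ ρ²|u|⁴` by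
`A^{1-1/s} (D² (2R(1+s)G)^{1+s})^{1/s}`. At `s = log₂(2 + G)` the excess power `G^{1/s}` is at most
`2`, and the factor `1 + s` becomes the logarithm.
-/

open scoped ENNReal

section Holder

variable {α : Type*} [MeasurableSpace α] {μ : Measure α} {f σ : α → ℝ≥0∞}

theorem lintegral_sq_le_rpow_mul_rpow (hf : AEMeasurable f μ) {s : ℝ} (hs : 1 ≤ s) :
    ∫⁻ a, f a ^ 2 ∂μ ≤ (∫⁻ a, f a ∂μ) ^ (1 - 1 / s) * (∫⁻ a, f a ^ (1 + s) ∂μ) ^ (1 / s) := by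
  have hs' : 1 / s ≤ 1 := (div_le_one (by linarith)).2 hs
  have hsplit (a : α) : f a ^ 2 = f a ^ (1 - 1 / s) * (f a ^ (1 + s)) ^ (1 / s) := by
    rw [← ENNReal.rpow_mul, ← ENNReal.rpow_add_of_nonneg _ _ (by linarith) (by positivity),
      ← ENNReal.rpow_natCast]
    congr 1
    field_simp
    push_cast
    ring
  simp_rw [hsplit]
  exact ENNReal.lintegral_mul_norm_pow_le hf (hf.pow_const _) (by linarith) (by positivity)
    (by ring)

theorem lintegral_mul_rpow_one_sub_le (hf : AEMeasurable f μ) (hσ : AEMeasurable σ μ) {θ : ℝ}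
    (hθ₀ : 0 ≤ θ) (hθ₁ : θ ≤ 1) :
    ∫⁻ a, f a * σ a ^ (1 - θ) ∂μ ≤ (∫⁻ a, f a ∂μ) ^ θ * (∫⁻ a, σ a * f a ∂μ) ^ (1 - θ) := by
  have hsplit (a : α) : f a * σ a ^ (1 - θ) = f a ^ θ * (σ a * f a) ^ (1 - θ) := by
    rw [ENNReal.mul_rpow_of_nonneg _ _ (by linarith), mul_left_comm,
      ← ENNReal.rpow_add_of_nonneg _ _ hθ₀ (by linarith), add_sub_cancel, ENNReal.rpow_one,
      mul_comm]
  simp_rw [hsplit]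
  exact ENNReal.lintegral_mul_norm_pow_le hf (hσ.mul hf) hθ₀ (by linarith) (by ring)

theorem lintegral_rpow_half_rpow_le (hf : AEMeasurable f μ) (hσ : AEMeasurable σ μ)
    (hσ_pos : ∀ᵐ a ∂μ, σ a ≠ 0) (hσ_fin : ∀ᵐ a ∂μ, σ a ≠ ∞) {p : ℝ} (hp : 1 ≤ p) :
    (∫⁻ a, f a ^ (1 / 2 : ℝ) ∂μ) ^ (2 * p) ≤
      (∫⁻ a, f a ∂μ) * (∫⁻ a, σ a * f a ∂μ) ^ (p - 1) * (∫⁻ a, σ a ^ (1 / p - 1) ∂μ) ^ p := by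
  have hp₀ : 0 < p := by linarith
  have hp' : 1 / p ≤ 1 := (div_le_one hp₀).2 hp
  have hsplit : ∀ᵐ a ∂μ, f a ^ (1 / 2 : ℝ) =
      (f a * σ a ^ (1 - 1 / p)) ^ (1 / 2 : ℝ) * (σ a ^ (1 / p - 1)) ^ (1 / 2 : ℝ) := by
    filter_upwards [hσ_pos, hσ_fin] with a h₀ h₁
    rw [← ENNReal.mul_rpow_of_nonneg _ _ (by norm_num), mul_assoc, ← ENNReal.rpow_add _ _ h₀ h₁]
    simp
  have hcs : ∫⁻ a, f a ^ (1 / 2 : ℝ) ∂μ ≤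
      (∫⁻ a, f a * σ a ^ (1 - 1 / p) ∂μ) ^ (1 / 2 : ℝ) *
        (∫⁻ a, σ a ^ (1 / p - 1) ∂μ) ^ (1 / 2 : ℝ) := by
    rw [lintegral_congr_ae hsplit]
    exact ENNReal.lintegral_mul_norm_pow_le (hf.mul (hσ.pow_const _)) (hσ.pow_const _)
      (by norm_num) (by norm_num) (by norm_num)
  calc (∫⁻ a, f a ^ (1 / 2 : ℝ) ∂μ) ^ (2 * p)
      ≤ ((∫⁻ a, f a * σ a ^ (1 - 1 / p) ∂μ) ^ (1 / 2 : ℝ) *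
          (∫⁻ a, σ a ^ (1 / p - 1) ∂μ) ^ (1 / 2 : ℝ)) ^ (2 * p) := by gcongr
    _ = (∫⁻ a, f a * σ a ^ (1 - 1 / p) ∂μ) ^ p * (∫⁻ a, σ a ^ (1 / p - 1) ∂μ) ^ p := by
        rw [ENNReal.mul_rpow_of_nonneg _ _ (by positivity), ← ENNReal.rpow_mul,
          ← ENNReal.rpow_mul, show 1 / 2 * (2 * p) = p by ring]
    _ ≤ ((∫⁻ a, f a ∂μ) ^ (1 / p) * (∫⁻ a, σ a * f a ∂μ) ^ (1 - 1 / p)) ^ p *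
          (∫⁻ a, σ a ^ (1 / p - 1) ∂μ) ^ p := by
        gcongr
        exact lintegral_mul_rpow_one_sub_le hf hσ (by positivity) hp'
    _ = _ := by
        rw [ENNReal.mul_rpow_of_nonneg _ _ hp₀.le, ← ENNReal.rpow_mul, ← ENNReal.rpow_mul,
          sub_mul, one_mul, one_div_mul_cancel hp₀.ne', ENNReal.rpow_one]

end Holder

theorem lintegral_lintegral_comp_add {α V : Type*} [MeasurableSpace α] [MeasurableSpace V]
    [AddGroup V] [MeasurableAdd₂ V] {μ : Measure α} [SFinite μ] {ν : Measure V} [SFinite ν]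
    [ν.IsAddRightInvariant] {g : V → ℝ≥0∞} (hg : Measurable g) {φ : α → V} (hφ : Measurable φ) :
    ∫⁻ x, ∫⁻ a, g (x + φ a) ∂μ ∂ν = μ univ * ∫⁻ x, g x ∂ν := by
  rw [lintegral_lintegral_swap (by fun_prop)]
  simp_rw [lintegral_add_right_eq_self g, lintegral_const, mul_comm]

theorem lintegral_finTwo {g : (Fin 2 → ℝ) → ℝ≥0∞} (hg : Measurable g) :
    ∫⁻ y, g y = ∫⁻ a, ∫⁻ b, g ![a, b] := by
  rw [← (volume_preserving_finTwoArrow ℝ).symm.lintegral_comp_emb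
    (MeasurableEquiv.measurableEmbedding _) g, Measure.volume_eq_prod,
    lintegral_prod (fun z => g (MeasurableEquiv.finTwoArrow.symm z)) (by fun_prop)]
  rfl

theorem lintegral_ofReal_mul_comp_mul_left {f : ℝ → ℝ≥0∞} (hf : Measurable f) {c : ℝ}
    (hc : 0 < c) : ∫⁻ t, ENNReal.ofReal c * f (c * t) = ∫⁻ t, f t := by
  conv_rhs => rw [← Real.smul_map_volume_mul_left hc.ne']
  rw [lintegral_smul_measure, lintegral_map hf (by fun_prop), abs_of_pos hc,
    lintegral_const_mul _ (by fun_prop), smul_eq_mul]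

theorem setLIntegral_Ioc_ofReal_rpow_sub_one {r D : ℝ} (hr : 0 < r) (hD : 0 ≤ D) :
    ∫⁻ s in Ioc 0 D, ENNReal.ofReal s ^ (r - 1) = ENNReal.ofReal (D ^ r / r) := by
  have hint : IntegrableOn (fun s : ℝ => s ^ (r - 1)) (Ioc 0 D) :=
    (intervalIntegral.intervalIntegrable_rpow' (by linarith)).1
  calc ∫⁻ s in Ioc 0 D, ENNReal.ofReal s ^ (r - 1)
      = ∫⁻ s in Ioc 0 D, ENNReal.ofReal (s ^ (r - 1)) :=
        setLIntegral_congr_fun measurableSet_Ioc fun s hs => ENNReal.ofReal_rpow_of_pos hs.1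
    _ = ENNReal.ofReal (∫ s in Ioc 0 D, s ^ (r - 1)) :=
        (ofReal_integral_eq_lintegral_ofReal hint <|
          ae_restrict_of_forall_mem measurableSet_Ioc fun s hs => Real.rpow_nonneg hs.1.le _).symm
    _ = ENNReal.ofReal (D ^ r / r) := by
        rw [← intervalIntegral.integral_of_le hD, integral_rpow (by left; linarith),
          sub_add_cancel, Real.zero_rpow hr.ne', sub_zero]

/-- Polar-type coordinates on the cone `0 ≤ y 1 ≤ y 0`: the parameters `(s, t)` stand for the point
with first coordinate `s` on the ray of slope `t` from the origin. -/
def slopePoint (z : ℝ × ℝ) : Fin 2 → ℝ :=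
  ![z.1, z.1 * z.2]

/-- The parameters of `slopePoint` for slopes in `[0, 1]` and first coordinates at most `D`. -/
def slopeDomain (D : ℝ) : Set (ℝ × ℝ) :=
  Ioc 0 D ×ˢ Icc 0 1

@[fun_prop]
theorem continuous_slopePoint : Continuous slopePoint := by
  refine continuous_pi fun i => ?_
  fin_cases i
  · exact continuous_fst
  · exact continuous_fst.mul continuous_snd

@[fun_prop]
theorem measurable_slopePoint : Measurable slopePoint :=
  continuous_slopePoint.measurable

theorem measurableSet_slopeDomain (D : ℝ) : MeasurableSet (slopeDomain D) :=
  measurableSet_Ioc.prod measurableSet_Icc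

theorem volume_slopeDomain (D : ℝ) : volume (slopeDomain D) = ENNReal.ofReal D := by
  rw [slopeDomain, Measure.volume_eq_prod, Measure.prod_prod]
  simp

theorem setLIntegral_slopeDomain_fst_mul_le {g : (Fin 2 → ℝ) → ℝ≥0∞} (hg : Measurable g)
    (x : Fin 2 → ℝ) (D : ℝ) :
    ∫⁻ z in slopeDomain D, ENNReal.ofReal z.1 * g (x + slopePoint z) ≤ ∫⁻ y, g y := by
  rw [← lintegral_add_left_eq_self g x, slopeDomain, Measure.volume_eq_prod,
    setLIntegral_prod _ (by fun_prop),
    lintegral_finTwo (by fun_prop)]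
  refine (setLIntegral_mono' measurableSet_Ioc fun s hs => ?_).trans
    (setLIntegral_le_lintegral _ _)
  calc ∫⁻ t in Icc 0 1, ENNReal.ofReal s * g (x + ![s, s * t])
      ≤ ∫⁻ t, ENNReal.ofReal s * g (x + ![s, s * t]) := setLIntegral_le_lintegral _ _
    _ = ∫⁻ t, g (x + ![s, t]) :=
        lintegral_ofReal_mul_comp_mul_left (f := fun t => g (x + ![s, t])) (by fun_prop) hs.1

theorem setLIntegral_slopeDomain_fst_rpow {r D : ℝ} (hr : 0 < r) (hD : 0 ≤ D) :
    ∫⁻ z in slopeDomain D, ENNReal.ofReal z.1 ^ (r - 1) = ENNReal.ofReal (D ^ r / r) := by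
  rw [slopeDomain, Measure.volume_eq_prod,
    setLIntegral_prod _ (by fun_prop)]
  simpa using setLIntegral_Ioc_ofReal_rpow_sub_one hr hD

section Weight

variable {X E : Type*} [MeasurableSpace X] {μ : Measure X} [NormedAddCommGroup E] {u : X → E}
  {ρ : X → ℝ}

theorem ae_mul_norm_sq_nonneg (hρ : ∀ᵐ x ∂μ, u x ≠ 0 → 0 ≤ ρ x) :
    ∀ᵐ x ∂μ, 0 ≤ ρ x * ‖u x‖ ^ 2 := by
  filter_upwards [hρ] with x hx
  by_cases h : u x = 0
  · simp [h]
  · exact mul_nonneg (hx h) (sq_nonneg _)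

theorem integrable_mul_norm_sq [TopologicalSpace X] [OpensMeasurableSpace X]
    [IsFiniteMeasureOnCompacts μ] (hu : Continuous u) (hc : HasCompactSupport u)
    (hρ : AEMeasurable ρ μ) {R : ℝ} (hρR : ∀ᵐ x ∂μ, u x ≠ 0 → 0 ≤ ρ x ∧ ρ x ≤ R) :
    Integrable (fun x => ρ x * ‖u x‖ ^ 2) μ := by
  have hmajorant : Integrable (fun x => R * ‖u x‖ ^ 2) μ :=
    (by fun_prop : Continuous fun x => R * ‖u x‖ ^ 2).integrable_of_hasCompactSupport <|
      HasCompactSupport.intro' hc (isClosed_tsupport u) fun x hx => by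
        simp [image_eq_zero_of_notMem_tsupport hx]
  have hmeas : AEMeasurable (fun x => ρ x * ‖u x‖ ^ 2) μ :=
    hρ.mul (hu.norm.pow 2).measurable.aemeasurable
  refine hmajorant.mono' hmeas.aestronglyMeasurable ?_
  filter_upwards [hρR, ae_mul_norm_sq_nonneg (hρR.mono fun x hx h => (hx h).1)] with x hx hnonneg
  rw [Real.norm_of_nonneg hnonneg]
  by_cases h : u x = 0
  · simp [h]
  · gcongr
    exact (hx h).2

end Weight

section Gradient

variable {E : Type*} [NormedAddCommGroup E] [NormedSpace ℝ E] {u : (Fin 2 → ℝ) → E}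

/-- The squared Frobenius norm `|∇u|²` of the derivative of a field on the plane. -/
noncomputable def gradNormSq (u : (Fin 2 → ℝ) → E) (x : Fin 2 → ℝ) : ℝ :=
  ∑ i, ‖fderiv ℝ u x (Pi.single i 1)‖ ^ 2

theorem gradNormSq_nonneg (u : (Fin 2 → ℝ) → E) (x : Fin 2 → ℝ) : 0 ≤ gradNormSq u x := by
  unfold gradNormSq
  positivity

theorem gradNormSq_eq_zero_of_notMem_tsupport {x : Fin 2 → ℝ} (hx : x ∉ tsupport u) :
    gradNormSq u x = 0 := by
  simp [gradNormSq, fderiv_of_notMem_tsupport ℝ hx]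

theorem continuous_gradNormSq (hu : ContDiff ℝ 1 u) : Continuous (gradNormSq u) :=
  continuous_finsetSum _ fun _ _ =>
    ((hu.continuous_fderiv one_ne_zero).clm_apply continuous_const).norm.pow 2

theorem integrable_gradNormSq (hu : ContDiff ℝ 1 u) (hc : HasCompactSupport u) :
    Integrable (gradNormSq u) :=
  (continuous_gradNormSq hu).integrable_of_hasCompactSupport <|
    HasCompactSupport.intro hc fun _ => gradNormSq_eq_zero_of_notMem_tsupport

theorem norm_fderiv_slope_sq_le (u : (Fin 2 → ℝ) → E) (x : Fin 2 → ℝ) {t : ℝ}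
    (ht : t ∈ Icc (0 : ℝ) 1) : ‖fderiv ℝ u x ![1, t]‖ ^ 2 ≤ 2 * gradNormSq u x := by
  obtain ⟨ht₀, ht₁⟩ := ht
  set a := fderiv ℝ u x (Pi.single 0 1)
  set b := fderiv ℝ u x (Pi.single 1 1)
  have hdecomp : fderiv ℝ u x ![1, t] = a + t • b := by
    rw [← map_smul, ← map_add]
    congr 1
    ext i
    fin_cases i <;> simp
  have hnorm : ‖a + t • b‖ ≤ ‖a‖ + ‖b‖ :=
    (norm_add_le _ _).trans <| by
      gcongr
      rw [norm_smul, Real.norm_of_nonneg ht₀]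
      exact mul_le_of_le_one_left (norm_nonneg b) ht₁
  calc ‖fderiv ℝ u x ![1, t]‖ ^ 2 ≤ (‖a‖ + ‖b‖) ^ 2 := by rw [hdecomp]; gcongr
    _ ≤ 2 * (‖a‖ ^ 2 + ‖b‖ ^ 2) := add_sq_le
    _ = 2 * gradNormSq u x := by rw [gradNormSq, Fin.sum_univ_two]

theorem enorm_fderiv_slope_le (u : (Fin 2 → ℝ) → E) (x : Fin 2 → ℝ) {t : ℝ}
    (ht : t ∈ Icc (0 : ℝ) 1) :
    ‖fderiv ℝ u x ![1, t]‖ₑ ≤ ENNReal.ofReal (2 * gradNormSq u x) ^ (1 / 2 : ℝ) := by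
  rw [← ofReal_norm, ENNReal.ofReal_rpow_of_nonneg (by linarith [gradNormSq_nonneg u x])
    (by norm_num), ← Real.sqrt_eq_rpow]
  exact ENNReal.ofReal_le_ofReal (Real.le_sqrt_of_sq_le (norm_fderiv_slope_sq_le u x ht))

theorem hasDerivAt_comp_slopePoint (hu : Differentiable ℝ u) (x : Fin 2 → ℝ) (s t : ℝ) :
    HasDerivAt (fun s => u (x + slopePoint (s, t)))
      (fderiv ℝ u (x + slopePoint (s, t)) ![1, t]) s := by
  have hslope : HasDerivAt (fun s => x + slopePoint (s, t)) ![1, t] s := by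
    refine HasDerivAt.const_add x (hasDerivAt_pi.2 fun i => ?_)
    fin_cases i
    · exact hasDerivAt_id s
    · simpa [slopePoint] using (hasDerivAt_id s).mul_const t
  exact (hu _).hasFDerivAt.comp_hasDerivAt s hslope

theorem enorm_le_setLIntegral_slope (hu : ContDiff ℝ 1 u) {x : Fin 2 → ℝ} {D t : ℝ} (hD : 0 ≤ D)
    (ht : t ∈ Icc (0 : ℝ) 1) (hexit : u (x + slopePoint (D, t)) = 0) :
    ‖u x‖ₑ ≤ ∫⁻ s in Ioc 0 D,
      ENNReal.ofReal (2 * gradNormSq u (x + slopePoint (s, t))) ^ (1 / 2 : ℝ) := by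
  have hline : ContDiff ℝ 1 fun s : ℝ => u (x + slopePoint (s, t)) := by
    refine hu.comp (contDiff_const.add (contDiff_pi.2 fun i => ?_))
    fin_cases i
    · exact contDiff_id
    · exact contDiff_id.mul contDiff_const
  have hstart : slopePoint (0, t) = 0 := by
    ext i
    fin_cases i <;> simp [slopePoint]
  calc ‖u x‖ₑ = ‖u (x + slopePoint (D, t)) - u (x + slopePoint (0, t))‖ₑ := by
        rw [hexit, hstart, add_zero, zero_sub, enorm_neg]
    _ ≤ ∫⁻ s in Ioc 0 D, ‖deriv (fun s => u (x + slopePoint (s, t))) s‖ₑ := by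
        rw [restrict_Ioc_eq_restrict_Icc]
        exact enorm_sub_le_lintegral_deriv_of_contDiffOn_Icc hline.contDiffOn hD
    _ ≤ _ := lintegral_mono fun s => by
        rw [(hasDerivAt_comp_slopePoint (hu.differentiable one_ne_zero) x s t).deriv]
        exact enorm_fderiv_slope_le u _ ht

theorem enorm_le_setLIntegral_slopeDomain (hu : ContDiff ℝ 1 u) {x : Fin 2 → ℝ} {D : ℝ}
    (hD : 0 ≤ D) (hexit : ∀ t, u (x + slopePoint (D, t)) = 0) :
    ‖u x‖ₑ ≤ ∫⁻ z in slopeDomain D,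
      ENNReal.ofReal (2 * gradNormSq u (x + slopePoint z)) ^ (1 / 2 : ℝ) := by
  have hgrad := (continuous_gradNormSq hu).measurable
  rw [slopeDomain, Measure.volume_eq_prod, setLIntegral_prod_symm _ (by fun_prop)]
  calc ‖u x‖ₑ = ∫⁻ _ in Icc (0 : ℝ) 1, ‖u x‖ₑ := by simp
    _ ≤ _ := setLIntegral_mono' measurableSet_Icc fun t ht =>
        enorm_le_setLIntegral_slope hu hD ht (hexit t)

theorem enorm_rpow_le_setLIntegral_slopeDomain (hu : ContDiff ℝ 1 u) {x : Fin 2 → ℝ} {D : ℝ}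
    (hD : 0 ≤ D) (hexit : ∀ t, u (x + slopePoint (D, t)) = 0) {p : ℝ} (hp : 1 ≤ p) :
    ‖u x‖ₑ ^ (2 * p) ≤
      (∫⁻ z in slopeDomain D, ENNReal.ofReal (2 * gradNormSq u (x + slopePoint z))) *
        (∫⁻ y, ENNReal.ofReal (2 * gradNormSq u y)) ^ (p - 1) * ENNReal.ofReal (p ^ p * D) := by
  have hgrad := (continuous_gradNormSq hu).measurable
  have hp₀ : 0 < p := by linarith
  have hpos : ∀ᵐ z ∂volume.restrict (slopeDomain D), ENNReal.ofReal z.1 ≠ 0 :=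
    ae_restrict_of_forall_mem (measurableSet_slopeDomain D) fun z hz =>
      (ENNReal.ofReal_pos.2 hz.1.1).ne'
  have hconst : (D ^ (1 / p) / (1 / p)) ^ p = p ^ p * D := by
    rw [div_div_eq_mul_div, div_one, Real.mul_rpow (by positivity) hp₀.le, ← Real.rpow_mul hD,
      one_div_mul_cancel hp₀.ne', Real.rpow_one, mul_comm]
  calc ‖u x‖ₑ ^ (2 * p)
      ≤ (∫⁻ z in slopeDomain D,
          ENNReal.ofReal (2 * gradNormSq u (x + slopePoint z)) ^ (1 / 2 : ℝ)) ^ (2 * p) := by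
        gcongr
        exact enorm_le_setLIntegral_slopeDomain hu hD hexit
    _ ≤ (∫⁻ z in slopeDomain D, ENNReal.ofReal (2 * gradNormSq u (x + slopePoint z))) *
          (∫⁻ z in slopeDomain D,
            ENNReal.ofReal z.1 * ENNReal.ofReal (2 * gradNormSq u (x + slopePoint z))) ^ (p - 1) *
          (∫⁻ z in slopeDomain D, ENNReal.ofReal z.1 ^ (1 / p - 1)) ^ p :=
        lintegral_rpow_half_rpow_le (by fun_prop) (by fun_prop) hpos
          (ae_of_all _ fun _ => ENNReal.ofReal_ne_top) hp
    _ ≤ _ := by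
        rw [setLIntegral_slopeDomain_fst_rpow (by positivity) hD,
          ENNReal.ofReal_rpow_of_nonneg (by positivity) hp₀.le, hconst]
        gcongr
        exact setLIntegral_slopeDomain_fst_mul_le
          (g := fun y => ENNReal.ofReal (2 * gradNormSq u y)) (by fun_prop) x D

theorem lintegral_enorm_rpow_le (hu : ContDiff ℝ 1 u) {D : ℝ} (hD : 0 ≤ D)
    (hwidth : ∀ x ∈ Function.support u, ∀ y ∈ Function.support u, dist (x 0) (y 0) < D)
    {p : ℝ} (hp : 1 ≤ p) :
    ∫⁻ x, ‖u x‖ₑ ^ (2 * p) ≤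
      ENNReal.ofReal (p ^ p * D ^ 2) * (∫⁻ x, ENNReal.ofReal (2 * gradNormSq u x)) ^ p := by
  have hgrad := (continuous_gradNormSq hu).measurable
  set S := ∫⁻ x, ENNReal.ofReal (2 * gradNormSq u x)
  have hexit (x) (hx : u x ≠ 0) (t : ℝ) : u (x + slopePoint (D, t)) = 0 := by
    by_contra hy
    simpa [slopePoint, abs_of_nonneg hD] using hwidth x hx _ hy
  have hpoint (x) : ‖u x‖ₑ ^ (2 * p) ≤
      (∫⁻ z in slopeDomain D, ENNReal.ofReal (2 * gradNormSq u (x + slopePoint z))) *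
        S ^ (p - 1) * ENNReal.ofReal (p ^ p * D) := by
    by_cases hx : u x = 0
    · simp [hx, show 0 < p by linarith]
    · exact enorm_rpow_le_setLIntegral_slopeDomain hu hD (hexit x hx) hp
  have htranslate :
      ∫⁻ x, ∫⁻ z in slopeDomain D, ENNReal.ofReal (2 * gradNormSq u (x + slopePoint z)) =
        ENNReal.ofReal D * S := by
    rw [lintegral_lintegral_comp_add (g := fun y => ENNReal.ofReal (2 * gradNormSq u y))
      (by fun_prop) measurable_slopePoint, Measure.restrict_apply_univ, volume_slopeDomain]
  have hS : S * S ^ (p - 1) = S ^ p := by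
    nth_rw 1 [← ENNReal.rpow_one S]
    rw [← ENNReal.rpow_add_of_nonneg _ _ zero_le_one (by linarith), add_sub_cancel]
  calc ∫⁻ x, ‖u x‖ₑ ^ (2 * p)
      ≤ ∫⁻ x, (∫⁻ z in slopeDomain D, ENNReal.ofReal (2 * gradNormSq u (x + slopePoint z))) *
          S ^ (p - 1) * ENNReal.ofReal (p ^ p * D) := lintegral_mono hpoint
    _ = ENNReal.ofReal D * S * S ^ (p - 1) * ENNReal.ofReal (p ^ p * D) := by
        rw [lintegral_mul_const _ (by fun_prop), lintegral_mul_const _ (by fun_prop), htranslate]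
    _ = ENNReal.ofReal (p ^ p * D ^ 2) * S ^ p := by
        rw [mul_assoc _ S, hS, mul_right_comm, ← ENNReal.ofReal_mul hD]
        congr 2
        ring

theorem lintegral_mul_norm_sq_rpow_le (hu : ContDiff ℝ 1 u) (hc : HasCompactSupport u) {D : ℝ}
    (hD : 0 ≤ D)
    (hwidth : ∀ x ∈ Function.support u, ∀ y ∈ Function.support u, dist (x 0) (y 0) < D)
    {ρ : (Fin 2 → ℝ) → ℝ} {R : ℝ} (hR : 0 ≤ R) (hρR : ∀ᵐ x, u x ≠ 0 → ρ x ≤ R)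
    {p : ℝ} (hp : 1 ≤ p) :
    ∫⁻ x, ENNReal.ofReal (ρ x * ‖u x‖ ^ 2) ^ p ≤
      ENNReal.ofReal (D ^ 2 * (2 * R * p * ∫ x, gradNormSq u x) ^ p) := by
  have hp₀ : 0 ≤ p := by linarith
  have hG : 0 ≤ ∫ x, gradNormSq u x := integral_nonneg (gradNormSq_nonneg u)
  have hbound : ∀ᵐ x, ENNReal.ofReal (ρ x * ‖u x‖ ^ 2) ^ p ≤
      ENNReal.ofReal R ^ p * ‖u x‖ₑ ^ (2 * p) := by
    filter_upwards [hρR] with x hx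
    rw [ENNReal.rpow_mul, ← ENNReal.mul_rpow_of_nonneg _ _ hp₀, ← ofReal_norm,
      ENNReal.ofReal_rpow_of_nonneg (norm_nonneg _) zero_le_two, Real.rpow_two,
      ← ENNReal.ofReal_mul hR]
    refine ENNReal.rpow_le_rpow (ENNReal.ofReal_le_ofReal ?_) hp₀
    by_cases h : u x = 0
    · simp [h]
    · gcongr
      exact hx h
  have hgrad : ∫⁻ x, ENNReal.ofReal (2 * gradNormSq u x) =
      ENNReal.ofReal (2 * ∫ x, gradNormSq u x) := by
    rw [← integral_const_mul, ofReal_integral_eq_lintegral_ofReal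
      ((integrable_gradNormSq hu hc).const_mul 2)
      (ae_of_all _ fun x => by have := gradNormSq_nonneg u x; positivity)]
  calc ∫⁻ x, ENNReal.ofReal (ρ x * ‖u x‖ ^ 2) ^ p
      ≤ ENNReal.ofReal R ^ p * ∫⁻ x, ‖u x‖ₑ ^ (2 * p) := by
        rw [← lintegral_const_mul' _ _ (by finiteness)]
        exact lintegral_mono_ae hbound
    _ ≤ ENNReal.ofReal R ^ p *
          (ENNReal.ofReal (p ^ p * D ^ 2) * ENNReal.ofReal (2 * ∫ x, gradNormSq u x) ^ p) := by
        gcongr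
        exact hgrad ▸ lintegral_enorm_rpow_le hu hD hwidth hp
    _ = _ := by
        rw [ENNReal.ofReal_rpow_of_nonneg hR hp₀, ENNReal.ofReal_rpow_of_nonneg (by positivity) hp₀,
          ← ENNReal.ofReal_mul (by positivity), ← ENNReal.ofReal_mul (by positivity)]
        congr 1
        rw [show 2 * R * p * ∫ x, gradNormSq u x = R * (p * (2 * ∫ x, gradNormSq u x)) by ring,
          Real.mul_rpow hR (by positivity), Real.mul_rpow hp₀ (by positivity)]
        ring

theorem integral_sq_mul_norm_pow_four_le_rpow (hu : ContDiff ℝ 1 u) (hc : HasCompactSupport u)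
    {D : ℝ} (hD : 0 ≤ D)
    (hwidth : ∀ x ∈ Function.support u, ∀ y ∈ Function.support u, dist (x 0) (y 0) < D)
    {ρ : (Fin 2 → ℝ) → ℝ} (hρ : AEMeasurable ρ) {R : ℝ} (hR : 0 ≤ R)
    (hρR : ∀ᵐ x, u x ≠ 0 → 0 ≤ ρ x ∧ ρ x ≤ R) {s : ℝ} (hs : 1 ≤ s) :
    ∫ x, ρ x ^ 2 * ‖u x‖ ^ 4 ≤ (∫ x, ρ x * ‖u x‖ ^ 2) ^ (1 - 1 / s) *
      (D ^ 2 * (2 * R * (1 + s) * ∫ x, gradNormSq u x) ^ (1 + s)) ^ (1 / s) := by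
  have hs' : 1 / s ≤ 1 := (div_le_one (by linarith)).2 hs
  have hG : 0 ≤ ∫ x, gradNormSq u x := integral_nonneg (gradNormSq_nonneg u)
  have hint := integrable_mul_norm_sq hu.continuous hc hρ hρR
  have hnonneg := ae_mul_norm_sq_nonneg (hρR.mono fun x hx h => (hx h).1)
  have hA : 0 ≤ ∫ x, ρ x * ‖u x‖ ^ 2 := integral_nonneg_of_ae hnonneg
  have hnorm : AEMeasurable fun x => ‖u x‖ := hu.continuous.norm.aemeasurable
  have hmeas : AEMeasurable fun x => ρ x ^ 2 * ‖u x‖ ^ 4 := by fun_prop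
  have hsq : ∫ x, ρ x ^ 2 * ‖u x‖ ^ 4 =
      (∫⁻ x, ENNReal.ofReal (ρ x * ‖u x‖ ^ 2) ^ 2).toReal := by
    rw [integral_eq_lintegral_of_nonneg_ae (ae_of_all _ fun x => by positivity)
      hmeas.aestronglyMeasurable]
    congr 1
    refine lintegral_congr_ae ?_
    filter_upwards [hnonneg] with x hx
    rw [← ENNReal.ofReal_pow hx]
    ring_nf
  rw [hsq]
  refine ENNReal.toReal_le_of_le_ofReal (by positivity) ?_
  calc ∫⁻ x, ENNReal.ofReal (ρ x * ‖u x‖ ^ 2) ^ 2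
      ≤ (∫⁻ x, ENNReal.ofReal (ρ x * ‖u x‖ ^ 2)) ^ (1 - 1 / s) *
          (∫⁻ x, ENNReal.ofReal (ρ x * ‖u x‖ ^ 2) ^ (1 + s)) ^ (1 / s) :=
        lintegral_sq_le_rpow_mul_rpow hint.aemeasurable.ennreal_ofReal hs
    _ ≤ ENNReal.ofReal (∫ x, ρ x * ‖u x‖ ^ 2) ^ (1 - 1 / s) *
          ENNReal.ofReal (D ^ 2 * (2 * R * (1 + s) * ∫ x, gradNormSq u x) ^ (1 + s)) ^ (1 / s) := by
        rw [ofReal_integral_eq_lintegral_ofReal hint hnonneg]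
        gcongr
        exact lintegral_mul_norm_sq_rpow_le hu hc hD hwidth hR
          (hρR.mono fun x hx h => (hx h).2) (by linarith)
    _ = _ := by
        rw [ENNReal.ofReal_rpow_of_nonneg hA (by linarith),
          ENNReal.ofReal_rpow_of_nonneg (by positivity) (by positivity),
          ← ENNReal.ofReal_mul (by positivity)]

end Gradient

theorem rpow_le_one_add {a r : ℝ} (ha : 0 ≤ a) (hr₀ : 0 ≤ r) (hr₁ : r ≤ 1) : a ^ r ≤ 1 + a :=
  calc a ^ r ≤ (1 + a) ^ r := by gcongr; linarith
    _ ≤ 1 + a := Real.rpow_le_self_of_one_le (by linarith) hr₁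

theorem one_add_rpow_one_div_le_two {s : ℝ} (hs : 1 ≤ s) : (1 + s) ^ (1 / s) ≤ 2 := by
  rw [one_div, Real.rpow_inv_le_iff_of_pos (by linarith) zero_le_two (by linarith)]
  simpa [one_add_one_eq_two] using
    one_add_mul_self_le_rpow_one_add (by norm_num : (-1 : ℝ) ≤ 1) hs

theorem one_le_logb_two_two_add {G : ℝ} (hG : 0 ≤ G) : 1 ≤ Real.logb 2 (2 + G) := by
  rw [Real.le_logb_iff_rpow_le one_lt_two (by linarith), Real.rpow_one]
  linarith

theorem logb_two_le_two_mul_log {y : ℝ} (hy : 1 ≤ y) : Real.logb 2 y ≤ 2 * Real.log y := by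
  have hlog := Real.log_nonneg hy
  have := Real.log_two_gt_d9
  rw [Real.logb, div_le_iff₀ (Real.log_pos one_lt_two)]
  nlinarith

theorem rpow_one_div_logb_two_le_two {G : ℝ} (hG : 0 ≤ G) :
    G ^ (1 / Real.logb 2 (2 + G)) ≤ 2 := by
  have hs := one_le_logb_two_two_add hG
  rw [one_div, Real.rpow_inv_le_iff_of_pos hG zero_le_two (by linarith),
    Real.rpow_logb zero_lt_two (by norm_num) (by linarith)]
  linarith

theorem rpow_mul_rpow_logb_two_le {A G K d : ℝ} (hA : 0 ≤ A) (hG : 0 ≤ G) (hK : 0 ≤ K)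
    (hd : 0 ≤ d) {s : ℝ} (hs : s = Real.logb 2 (2 + G)) :
    A ^ (1 - 1 / s) * (d * (K * (1 + s) * G) ^ (1 + s)) ^ (1 / s) ≤
      16 * (1 + K) ^ 2 * (1 + d) * (1 + A) * G * Real.log (2 + G) := by
  have hs₁ : 1 ≤ s := hs ▸ one_le_logb_two_two_add hG
  have hs_inv : 1 / s ≤ 1 := (div_le_one (by linarith)).2 hs₁
  have hlog : 0 ≤ Real.log (2 + G) := Real.log_nonneg (by linarith)
  have hs_log : s ≤ 2 * Real.log (2 + G) := hs ▸ logb_two_le_two_mul_log (by linarith)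
  have hG_root : G ^ (1 / s) ≤ 2 := by rw [hs]; exact rpow_one_div_logb_two_le_two hG
  have hexp : (K * (1 + s) * G) ^ ((1 + s) * (1 / s)) =
      K * (1 + s) * G * (K ^ (1 / s) * (1 + s) ^ (1 / s) * G ^ (1 / s)) := by
    rw [add_mul, mul_one_div_cancel (by linarith), one_mul, add_comm (1 / s),
      Real.rpow_add_of_nonneg (by positivity) zero_le_one (by positivity), Real.rpow_one,
      Real.mul_rpow (by positivity) hG, Real.mul_rpow hK (by positivity)]
  calc A ^ (1 - 1 / s) * (d * (K * (1 + s) * G) ^ (1 + s)) ^ (1 / s)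
      = A ^ (1 - 1 / s) * (d ^ (1 / s) *
          (K * (1 + s) * G * (K ^ (1 / s) * (1 + s) ^ (1 / s) * G ^ (1 / s)))) := by
        rw [Real.mul_rpow hd (by positivity), ← Real.rpow_mul (by positivity), hexp]
    _ ≤ (1 + A) * ((1 + d) *
          ((1 + K) * (4 * Real.log (2 + G)) * G * ((1 + K) * 2 * 2))) := by
        gcongr
        · exact rpow_le_one_add hA (by linarith) (by linarith [show 0 ≤ 1 / s by positivity])
        · exact rpow_le_one_add hd (by positivity) hs_inv
        · linarith
        · linarith
        · exact rpow_le_one_add hK (by positivity) hs_inv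
        · exact one_add_rpow_one_div_le_two hs₁
    _ = _ := by ring

theorem rpow_half_le_of_le_mul_one_add {X c A G L : ℝ} (hc : 0 ≤ c) (hA : 0 ≤ A) (hG : 0 ≤ G)
    (h : X ≤ c * (1 + A) * G * L) :
    X ^ (1 / 2 : ℝ) ≤ √c * (1 + A ^ (1 / 2 : ℝ)) * G ^ (1 / 2 : ℝ) * √L := by
  simp_rw [← Real.sqrt_eq_rpow]
  have hA_sqrt : √(1 + A) ≤ 1 + √A := by
    rw [Real.sqrt_le_iff]
    constructor
    · positivity
    · nlinarith [Real.sqrt_nonneg A, Real.sq_sqrt hA]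
  calc √X ≤ √(c * (1 + A) * G * L) := Real.sqrt_le_sqrt h
    _ = √c * √(1 + A) * √G * √L := by
        rw [Real.sqrt_mul (by positivity), Real.sqrt_mul (by positivity), Real.sqrt_mul hc]
    _ ≤ √c * (1 + √A) * √G * √L := by gcongr

section Interpolation

variable {E : Type*} [NormedAddCommGroup E] [NormedSpace ℝ E] {u : (Fin 2 → ℝ) → E}

theorem integral_sq_mul_norm_pow_four_le (hu : ContDiff ℝ 1 u) (hc : HasCompactSupport u)
    {D : ℝ} (hD : 0 ≤ D)
    (hwidth : ∀ x ∈ Function.support u, ∀ y ∈ Function.support u, dist (x 0) (y 0) < D)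
    {ρ : (Fin 2 → ℝ) → ℝ} (hρ : AEMeasurable ρ) {R : ℝ} (hR : 0 ≤ R)
    (hρR : ∀ᵐ x, u x ≠ 0 → 0 ≤ ρ x ∧ ρ x ≤ R) :
    ∫ x, ρ x ^ 2 * ‖u x‖ ^ 4 ≤
      16 * (1 + 2 * R) ^ 2 * (1 + D ^ 2) * (1 + ∫ x, ρ x * ‖u x‖ ^ 2) *
        (∫ x, gradNormSq u x) * Real.log (2 + ∫ x, gradNormSq u x) := by
  have hG : 0 ≤ ∫ x, gradNormSq u x := integral_nonneg (gradNormSq_nonneg u)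
  have hA : 0 ≤ ∫ x, ρ x * ‖u x‖ ^ 2 :=
    integral_nonneg_of_ae (ae_mul_norm_sq_nonneg (hρR.mono fun x hx h => (hx h).1))
  exact (integral_sq_mul_norm_pow_four_le_rpow hu hc hD hwidth hρ hR hρR
    (one_le_logb_two_two_add hG)).trans <|
      rpow_mul_rpow_logb_two_le hA hG (by positivity) (by positivity) rfl

end Interpolation

theorem gradNormSq_toLp {ι : Type*} [Fintype ι] {u : (Fin 2 → ℝ) → ι → ℝ} {x : Fin 2 → ℝ}
    (hu : DifferentiableAt ℝ u x) :
    gradNormSq (fun y => WithLp.toLp 2 (u y)) x = ∑ i, ∑ j, pd (fun y => u y j) i x ^ 2 := by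
  have hfderiv : fderiv ℝ (fun y => WithLp.toLp 2 (u y)) x =
      (PiLp.continuousLinearEquiv 2 ℝ fun _ : ι => ℝ).symm.toContinuousLinearMap ∘L
        fderiv ℝ u x :=
    ((PiLp.continuousLinearEquiv 2 ℝ fun _ : ι => ℝ).symm.hasFDerivAt.comp x hu.hasFDerivAt).fderiv
  simp [gradNormSq, pd, hfderiv, EuclideanSpace.real_norm_sq_eq, fderiv_apply hu]

theorem desjardins_interpolation_general (E : Type*) [NormedAddCommGroup E] [NormedSpace ℝ E]
    (Ω : Set (Fin 2 → ℝ)) (hΩ : Bornology.IsBounded (Function.eval 0 '' Ω)) (R : ℝ) (hR : 0 ≤ R) :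
    ∃ C > 0, ∀ (ρ : (Fin 2 → ℝ) → ℝ) (u : (Fin 2 → ℝ) → E),
      AEMeasurable ρ → (∀ᵐ x, x ∈ Ω → 0 ≤ ρ x ∧ ρ x ≤ R) →
      ContDiff ℝ 1 u → HasCompactSupport u → tsupport u ⊆ Ω →
      (∫ x in Ω, ρ x ^ 2 * ‖u x‖ ^ 4) ^ (1 / 2 : ℝ)
        ≤ C * (1 + (∫ x in Ω, ρ x * ‖u x‖ ^ 2) ^ (1 / 2 : ℝ))
            * (∫ x in Ω, gradNormSq u x) ^ (1 / 2 : ℝ)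
            * √(Real.log (2 + ∫ x in Ω, gradNormSq u x)) := by
  obtain ⟨D, hD, hwidth⟩ := (Metric.isBounded_iff_exists_ge 0).1 hΩ
  refine ⟨√(16 * (1 + 2 * R) ^ 2 * (1 + (D + 1) ^ 2)), by positivity, ?_⟩
  intro ρ u hρ hρR hu hc hsupp
  have hu_zero (x) (hx : x ∉ Ω) : u x = 0 :=
    image_eq_zero_of_notMem_tsupport fun h => hx (hsupp h)
  have hmem (x) (hx : u x ≠ 0) : x ∈ Ω := not_imp_comm.1 (hu_zero x) hx
  have hρR' : ∀ᵐ x, u x ≠ 0 → 0 ≤ ρ x ∧ ρ x ≤ R := hρR.mono fun x hx h => hx (hmem x h)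
  rw [setIntegral_eq_integral_of_forall_compl_eq_zero fun x hx => by simp [hu_zero x hx],
    setIntegral_eq_integral_of_forall_compl_eq_zero fun x hx => by simp [hu_zero x hx],
    setIntegral_eq_integral_of_forall_compl_eq_zero fun x hx =>
      gradNormSq_eq_zero_of_notMem_tsupport fun h => hx (hsupp h)]
  refine rpow_half_le_of_le_mul_one_add (by positivity)
    (integral_nonneg_of_ae (ae_mul_norm_sq_nonneg (hρR'.mono fun x hx h => (hx h).1)))
    (integral_nonneg (gradNormSq_nonneg u))
    (integral_sq_mul_norm_pow_four_le hu hc (by positivity) (fun x hx y hy => ?_) hρ hR hρR')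
  exact (hwidth (mem_image_of_mem _ (hmem x hx)) (mem_image_of_mem _ (hmem y hy))).trans_lt
    (lt_add_one D)

/-- Desjardins' interpolation inequality: on a bounded smooth planar domain, for
`0 ≤ ρ ≤ Rbar` and `u ∈ H₀¹(Ω;ℝ²)` (represented by a C¹ field compactly supported in `Ω`),
`‖√ρ u‖²_{L⁴} ≤ C(Rbar,Ω) (1 + ‖√ρ u‖_{L²}) ‖∇u‖_{L²} √(log(2 + ‖∇u‖²_{L²}))`. -/
theorem desjardins_interpolation
    (Ω : Set (Fin 2 → ℝ)) (hΩopen : IsOpen Ω) (hΩne : Ω.Nonempty)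
    (hΩbdd : Bornology.IsBounded Ω) (Rbar : ℝ) (hRbar : 0 ≤ Rbar) :
    ∃ C > 0, ∀ (ρ : (Fin 2 → ℝ) → ℝ) (u : (Fin 2 → ℝ) → Fin 2 → ℝ),
      Measurable ρ → (∀ x ∈ Ω, 0 ≤ ρ x ∧ ρ x ≤ Rbar) →
      ContDiff ℝ 1 u → HasCompactSupport u → tsupport u ⊆ Ω →
      (∫ x in Ω, ρ x ^ 2 * (∑ i, u x i ^ 2) ^ 2) ^ (1/2 : ℝ)
        ≤ C * (1 + (∫ x in Ω, ρ x * ∑ i, u x i ^ 2) ^ (1/2 : ℝ))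
            * (∫ x in Ω, ∑ i, ∑ j, (pd (fun y => u y j) i x) ^ 2) ^ (1/2 : ℝ)
            * Real.sqrt (Real.log (2 + ∫ x in Ω, ∑ i, ∑ j, (pd (fun y => u y j) i x) ^ 2)) := by
  obtain ⟨C, hC, hbound⟩ := desjardins_interpolation_general (EuclideanSpace ℝ (Fin 2)) Ω
    (hΩbdd.image_eval 0) Rbar hRbar
  refine ⟨C, hC, fun ρ u hρ hρR hu hc hsupp => ?_⟩
  have hnorm (x) : ∑ i, u x i ^ 2 = ‖WithLp.toLp 2 (u x)‖ ^ 2 :=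
    (EuclideanSpace.real_norm_sq_eq (WithLp.toLp 2 (u x))).symm
  have hsupp_toLp : tsupport (fun x => WithLp.toLp 2 (u x)) ⊆ tsupport u :=
    closure_mono fun x => by simp
  have hgrad (x) := gradNormSq_toLp (hu.differentiable one_ne_zero x)
  simp_rw [hnorm, ← hgrad, ← pow_mul]
  exact hbound ρ _ hρ.aemeasurable (ae_of_all _ hρR)
    (PiLp.contDiff_toLp.comp hu) (hc.comp_left (g := WithLp.toLp 2) rfl) (hsupp_toLp.trans hsupp)
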